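/- Let X ⊆ P² be a k-configuration of type (d₁,…,d_s) with d_s > s, and suppose there are exactly r lines in P² containing exactly d_s points of X. Then for every integer m ≥ 2, ΔH_{mX}(m·d_s − 1) = r. -/

import Mathlib

/-!
The superabundance `δ(t)` of a fat point scheme is the difference between its length and the value
of its Hilbert function at `t`. Multiplying forms by the equation of a line `L` and restricting
forms to `L` compares `δ(t + 1)` with the superabundance in degree `t` of the residual scheme: if
the scheme meets `L` in degree `e`, then `δ(t + 1)` exceeds the latter by at least `e - (t + 2)` and
at most `max 0 (e - (t + 2))`, since forms of degree `t + 1` on `L` have `t + 2` coefficients.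

For `mX` and the lines `Lₛ, …, L₁`, taken in this order, the points of `X ∩ Lᵢ` outside `Xᵢ` have
lost multiplicity before `Lᵢ` is reached. Starting from degree `m dₛ - 2`, the excess on `Lᵢ` is
therefore at most `1 - (m - 1) (dₛ - |X ∩ Lᵢ|)`, so a line contributes at most `1`, and only if it
contains `dₛ` points. What remains is contained in `(m - 1)X`, in degree at least `(m - 1) dₛ - 1`
because `s < dₛ`; there the superabundance vanishes, by induction on `m`. This bounds
`δ(m dₛ - 2)` by the number of `i` with `|X ∩ Lᵢ| = dₛ`. Taking residuals with respect to exactly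
these lines gives the opposite bound, because each line already taken meets the next one in a single
point. As `δ(m dₛ - 1) = 0`, the difference of the Hilbert function at `m dₛ - 1` is `δ(m dₛ - 2)`.
Finally, a line with `dₛ > s` points of `X` is one of the `Lᵢ`: the points of `X` lie on
`L₁, …, Lₛ`, each of which meets any other line once.
-/

/-- The projective plane over a field `K`, as the projectivization of `K³`. -/
abbrev P2 (K : Type) [Field K] := Projectivization K (Fin 3 → K)

/-- A line in `P2 K`: a 2-dimensional linear subspace of `K³`. -/
structure ProjLine (K : Type) [Field K] where
  toSubmodule : Submodule K (Fin 3 → K)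
  finrank_eq_two : Module.finrank K toSubmodule = 2

/-- The set of points of `P2 K` lying on a line. -/
def ProjLine.points {K : Type} [Field K] (L : ProjLine K) : Set (P2 K) :=
  {p | p.submodule ≤ L.toSubmodule}

/-- The homogeneous prime ideal of a point of `P2 K`: the ideal generated by
the linear forms vanishing at the point. -/
noncomputable def pointIdeal {K : Type} [Field K] (p : P2 K) :
    Ideal (MvPolynomial (Fin 3) K) :=
  Ideal.span {f | f.IsHomogeneous 1 ∧ MvPolynomial.eval p.rep f = 0}

/-- The defining ideal `I_{mX} = ⋂_{P ∈ X} I_P^m` of the fat point scheme `mX`. -/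
noncomputable def fatIdeal {K : Type} [Field K] (X : Set (P2 K)) (m : ℕ) :
    Ideal (MvPolynomial (Fin 3) K) :=
  ⨅ p ∈ X, (pointIdeal p) ^ m

/-- The Hilbert function of `R/I`: `H(t) = dim_K R_t - dim_K I_t`. -/
noncomputable def hilb {K : Type} [Field K] (I : Ideal (MvPolynomial (Fin 3) K)) (t : ℕ) : ℕ :=
  Module.finrank K ↥(MvPolynomial.homogeneousSubmodule (Fin 3) K t) -
    Module.finrank K ↥(Submodule.restrictScalars K (I : Submodule (MvPolynomial (Fin 3) K) (MvPolynomial (Fin 3) K)) ⊓ MvPolynomial.homogeneousSubmodule (Fin 3) K t)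

/-- The Hilbert function extended to `ℤ`, with `H(t) = 0` for `t < 0`. -/
noncomputable def hilbZ {K : Type} [Field K] (I : Ideal (MvPolynomial (Fin 3) K)) (t : ℤ) : ℤ :=
  if t < 0 then 0 else hilb I t.toNat

/-- The first difference `ΔH(t) = H(t) - H(t-1)` of the Hilbert function. -/
noncomputable def deltaHilb {K : Type} [Field K] (I : Ideal (MvPolynomial (Fin 3) K)) (t : ℤ) : ℤ :=
  hilbZ I t - hilbZ I (t - 1)

/-- `X` is a k-configuration of type `(d 0, …, d (s-1))` defined using the subsets
`Xs 0, …, Xs (s-1)` and the (distinct) lines `Ls 0, …, Ls (s-1)`. -/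
structure IsKConfig {K : Type} [Field K] {s : ℕ} (X : Set (P2 K)) (d : Fin s → ℕ)
    (Xs : Fin s → Set (P2 K)) (Ls : Fin s → ProjLine K) : Prop where
  one_le : ∀ i, 1 ≤ d i
  strictMono : StrictMono d
  lines_distinct : Function.Injective Ls
  union_eq : X = ⋃ i, Xs i
  card_eq : ∀ i, (Xs i).ncard = d i
  subset_line : ∀ i, Xs i ⊆ (Ls i).points
  not_mem : ∀ i j : Fin s, j < i → ∀ p ∈ Xs j, p ∉ (Ls i).points

open MvPolynomial Module
open scoped Finset

section Polynomials

variable {σ R : Type*} [CommRing R]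

theorem aeval_sub_aeval_mem {A : Type*} [CommRing A] [Algebra R A] {I : Ideal A} {x y : σ → A}
    (h : ∀ i, x i - y i ∈ I) (f : MvPolynomial σ R) : aeval x f - aeval y f ∈ I := by
  have hxy : (Ideal.Quotient.mkₐ R I).comp (aeval x) = (Ideal.Quotient.mkₐ R I).comp (aeval y) :=
    algHom_ext fun i => by simpa using Ideal.Quotient.eq.2 (h i)
  exact Ideal.Quotient.eq.1 (DFunLike.congr_fun hxy f)

theorem aeval_mem_pow_of_isHomogeneous {A : Type*} [CommRing A] [Algebra R A] {I : Ideal A}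
    {y : σ → A} (hy : ∀ i, y i ∈ I) {n : ℕ} {f : MvPolynomial σ R} (hf : f.IsHomogeneous n) :
    aeval y f ∈ I ^ n := by
  rw [aeval_def, eval₂_eq]
  refine Ideal.sum_mem _ fun e he => Ideal.mul_mem_left _ _ ?_
  rw [hf.degree_eq_sum_deg_support he, ← Finset.prod_pow_eq_pow_sum]
  exact Ideal.prod_mem_prod fun i _ => Ideal.pow_mem_pow (hy i) _

theorem exists_eq_sum_smul_X_of_isHomogeneous_one [Fintype σ] {f : MvPolynomial σ R}
    (hf : f.IsHomogeneous 1) : ∃ c : σ → R, f = ∑ i, c i • X i := by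
  have hspan : f ∈ Submodule.span R (Set.range X) := by
    rwa [← homogeneousSubmodule_one_eq_span_X]
  obtain ⟨c, hc⟩ := (Submodule.mem_span_range_iff_exists_fun R).1 hspan
  exact ⟨c, hc.symm⟩

theorem exists_isHomogeneous_eq_mul_of_dvd {f g : MvPolynomial σ R} {m n : ℕ}
    (hf : f.IsHomogeneous m) (hg : g.IsHomogeneous (m + n)) (h : f ∣ g) :
    ∃ q, q.IsHomogeneous n ∧ g = f * q := by
  classical
  let _ : GradedAlgebra (homogeneousSubmodule σ R) := gradedAlgebra
  obtain ⟨q, rfl⟩ := h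
  refine ⟨DirectSum.decompose (homogeneousSubmodule σ R) q n,
    SetLike.coe_mem (DirectSum.decompose (homogeneousSubmodule σ R) q n), ?_⟩
  rw [← DirectSum.coe_decompose_mul_add_of_left_mem (homogeneousSubmodule σ R) hf,
    DirectSum.decompose_of_mem_same _ hg]

theorem eq_zero_of_dvd_of_isHomogeneous {f g : MvPolynomial σ R} {m n : ℕ}
    (hf : f.IsHomogeneous m) (hg : g.IsHomogeneous n) (hmn : n < m) (h : f ∣ g) : g = 0 := by
  classical
  let _ : GradedAlgebra (homogeneousSubmodule σ R) := gradedAlgebra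
  obtain ⟨q, rfl⟩ := h
  rw [← DirectSum.decompose_of_mem_same (homogeneousSubmodule σ R) hg,
    DirectSum.coe_decompose_mul_of_left_mem_of_not_le _ hf hmn.not_ge]

theorem finrank_homogeneousSubmodule [Fintype σ] [Nontrivial R] (n : ℕ) :
    finrank R (homogeneousSubmodule σ R n) = (Fintype.card σ + n - 1).choose n := by
  classical
  rw [homogeneousSubmodule_eq_finsupp_supported]
  change finrank R (restrictSupport R {d : σ →₀ ℕ | d.degree = n}) = _
  have hdeg : {d : σ →₀ ℕ | d.degree = n} =
      ((Finset.univ : Finset σ).finsuppAntidiag n : Set (σ →₀ ℕ)) := by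
    ext d
    simp [Finsupp.degree_eq_sum]
  rw [finrank_eq_nat_card_basis (basisRestrictSupport R {d : σ →₀ ℕ | d.degree = n}), hdeg,
    Nat.card_coe_set_eq, Set.ncard_coe_finset, Finset.card_finsuppAntidiag_nat_eq_choose,
    Finset.card_univ]

instance [Finite σ] (n : ℕ) : Module.Finite R (homogeneousSubmodule σ R n) :=
  Module.Finite.iff_fg.2 (homogeneousSubmodule_fg σ R n)

end Polynomials

section LinearAlgebra

variable {K V W : Type*} [Field K] [AddCommGroup V] [Module K V] [AddCommGroup W] [Module K W]

theorem finrank_map_of_injective {f : V →ₗ[K] W} (hf : Function.Injective f)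
    (U : Submodule K V) : finrank K (U.map f) = finrank K U :=
  (U.equivMapOfInjective f hf).finrank_eq.symm

theorem finrank_map_add_finrank_inf_ker (U : Submodule K V) [FiniteDimensional K U]
    (f : V →ₗ[K] W) :
    finrank K (U.map f) + finrank K ↥(U ⊓ LinearMap.ker f) = finrank K U := by
  rw [← (f.domRestrict U).finrank_range_add_finrank_ker, LinearMap.range_domRestrict,
    LinearMap.ker_domRestrict, ← Submodule.map_comap_subtype,
    Submodule.finrank_map_subtype_eq]

end LinearAlgebra

section LinearForms

variable {K σ τ : Type*} [Field K]

/-- `l` is a linear equation of the hyperplane `W`. -/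
structure IsEquation (W : Submodule K (σ → K)) (l : MvPolynomial σ K) : Prop where
  isHomogeneous : l.IsHomogeneous 1
  ne_zero : l ≠ 0
  mem_iff : ∀ v, v ∈ W ↔ eval v l = 0

theorem exists_isEquation [Fintype σ] {W : Submodule K (σ → K)}
    (hW : finrank K W + 1 = Fintype.card σ) : ∃ l, IsEquation W l := by
  classical
  have hrank : finrank K ((σ → K) ⧸ W) = finrank K K := by
    have := W.finrank_quotient_add_finrank
    rw [finrank_fintype_fun_eq_card] at this
    rw [finrank_self]
    omega
  let ψ : (σ → K) →ₗ[K] K := (LinearEquiv.ofFinrankEq _ _ hrank).toLinearMap ∘ₗ W.mkQ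
  have hker : LinearMap.ker ψ = W := by rw [LinearEquiv.ker_comp, W.ker_mkQ]
  let l : MvPolynomial σ K := ∑ i, ψ (Pi.single i 1) • X i
  have heval (v : σ → K) : eval v l = ψ v := by
    conv_rhs => rw [pi_eq_sum_univ' v, map_sum]
    simp [l, smul_eval, mul_comm]
  refine ⟨l, IsHomogeneous.sum _ _ _ fun i _ => ?_, fun hl => ?_, fun v => ?_⟩
  · rw [smul_eq_C_mul]
    exact isHomogeneous_C_mul_X _ i
  · have : ψ = 0 := LinearMap.ext fun v => by rw [← heval, hl, map_zero, LinearMap.zero_apply]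
    rw [← hker, this, LinearMap.ker_zero, finrank_top, finrank_fintype_fun_eq_card] at hW
    omega
  · rw [heval, ← hker, LinearMap.mem_ker]

theorem IsEquation.dvd [Finite σ] {W : Submodule K (σ → K)} {l g : MvPolynomial σ K}
    (hl : IsEquation W l) (hg : g.IsHomogeneous 1) (hgW : ∀ v ∈ W, eval v g = 0) : l ∣ g := by
  cases nonempty_fintype σ
  obtain ⟨a, rfl⟩ := exists_eq_sum_smul_X_of_isHomogeneous_one hl.isHomogeneous
  obtain ⟨c, rfl⟩ := exists_eq_sum_smul_X_of_isHomogeneous_one hg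
  classical
  have hspan : dotProductEquiv K σ c ∈
      Submodule.span K (Set.range fun _ : Unit => dotProductEquiv K σ a) := by
    refine mem_span_of_iInf_ker_le_ker ?_
    rw [iInf_const]
    intro v hv
    have := hgW v ((hl.mem_iff v).2 (by simpa [smul_eval, dotProduct] using hv))
    simpa [smul_eval, dotProduct] using this
  rw [Set.range_const, Submodule.mem_span_singleton] at hspan
  obtain ⟨k, hk⟩ := hspan
  rw [← map_smul] at hk
  rw [← (dotProductEquiv K σ).injective hk]
  exact ⟨C k, by simp only [Finset.sum_mul, Pi.smul_apply, smul_eq_C_mul, smul_eq_mul, map_mul,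
    mul_right_comm, mul_comm (C k)]⟩

theorem IsEquation.prime {W : Submodule K (σ → K)} {l : MvPolynomial σ K} (hl : IsEquation W l) :
    Prime l := by
  refine (irreducible_of_totalDegree_eq_one (hl.isHomogeneous.totalDegree hl.ne_zero)
    fun x hx => ?_).prime
  obtain ⟨e, he⟩ := ne_zero_iff.1 hl.ne_zero
  exact isUnit_iff_ne_zero.2 fun h0 => he (zero_dvd_iff.1 (h0 ▸ hx e))

theorem IsEquation.isRelPrime {W W' : Submodule K (σ → K)} {l l' : MvPolynomial σ K}
    (hl : IsEquation W l) (hl' : IsEquation W' l') (hW : ¬W ≤ W') : IsRelPrime l l' :=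
  hl.prime.irreducible.isRelPrime_iff_not_dvd.2 fun hdvd => hW fun v hv => by
    rw [hl.mem_iff] at hv
    rw [hl'.mem_iff]
    exact zero_dvd_iff.1 (hv ▸ map_dvd (eval v) hdvd)

/-- The restriction of polynomials along a linear map of coordinate spaces. -/
noncomputable def pullback [Fintype τ] [DecidableEq τ] (f : (τ → K) →ₗ[K] (σ → K)) :
    MvPolynomial σ K →ₐ[K] MvPolynomial τ K :=
  bind₁ (LinearMap.toMatrix' f).toMvPolynomial

theorem eval_pullback [Fintype τ] [DecidableEq τ] (f : (τ → K) →ₗ[K] (σ → K)) (v : τ → K)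
    (g : MvPolynomial σ K) : eval v (pullback f g) = eval (f v) g := by
  have : (fun i => eval v ((LinearMap.toMatrix' f).toMvPolynomial i)) = f v := by
    ext i
    rw [Matrix.toMvPolynomial_eval_eq_apply, LinearMap.toMatrix'_mulVec]
  rw [← this, pullback, ← aeval_eq_eval, aeval_bind₁]
  rfl

theorem isHomogeneous_pullback [Fintype τ] [DecidableEq τ] (f : (τ → K) →ₗ[K] (σ → K)) {n : ℕ}
    {g : MvPolynomial σ K} (hg : g.IsHomogeneous n) : (pullback f g).IsHomogeneous n := by
  rw [← one_mul n]
  exact hg.aeval _ fun i => (LinearMap.toMatrix' f).toMvPolynomial_isHomogeneous i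

theorem pullback_pullback [Fintype σ] [Fintype τ] [DecidableEq σ] [DecidableEq τ]
    (f : (τ → K) →ₗ[K] (σ → K)) (g : (σ → K) →ₗ[K] (τ → K)) (h : MvPolynomial σ K) :
    pullback g (pullback f h) = pullback (f ∘ₗ g) h := by
  rw [pullback, pullback, pullback, bind₁_bind₁, LinearMap.toMatrix'_comp]
  congr! 2
  ext1 i
  exact (Matrix.toMvPolynomial_mul _ _ i).symm

theorem IsEquation.dvd_of_pullback_eq_zero [Finite σ] [Fintype τ] [DecidableEq τ]
    {W : Submodule K (σ → K)} {l g : MvPolynomial σ K} (hl : IsEquation W l)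
    {f : (τ → K) →ₗ[K] (σ → K)} (hf : Function.Injective f) (hW : W ≤ LinearMap.range f)
    (hg : pullback f g = 0) : l ∣ g := by
  cases nonempty_fintype σ
  classical
  obtain ⟨π, hπ⟩ := f.exists_leftInverse_of_injective (LinearMap.ker_eq_bot.2 hf)
  have hX (i : σ) : X i - pullback (f ∘ₗ π) (X i) ∈ Ideal.span {l} := by
    refine Ideal.mem_span_singleton.2 (hl.dvd
      ((isHomogeneous_X K i).sub (isHomogeneous_pullback _ (isHomogeneous_X K i))) fun v hv => ?_)
    obtain ⟨w, rfl⟩ := hW hv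
    have hw : π (f w) = w := LinearMap.congr_fun hπ w
    simp [eval_pullback, hw]
  have hmem := aeval_sub_aeval_mem hX g
  have h0 : aeval (fun i => pullback (f ∘ₗ π) (X i)) g = 0 := by
    have : aeval (fun i => pullback (f ∘ₗ π) (X i)) = pullback (f ∘ₗ π) :=
      algHom_ext fun i => by simp
    rw [this, ← pullback_pullback, hg, map_zero]
  rwa [h0, sub_zero, aeval_X_left_apply, Ideal.mem_span_singleton] at hmem

theorem finrank_le_of_forall_dvd {Q : MvPolynomial (Fin 2) K} {e n : ℕ} (hQ : Q.IsHomogeneous e)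
    {U : Submodule K (MvPolynomial (Fin 2) K)} (hU : U ≤ homogeneousSubmodule (Fin 2) K n)
    (hdvd : ∀ f ∈ U, Q ∣ f) : finrank K U ≤ n + 1 - e := by
  obtain hen | hlt := le_or_gt e n
  · obtain ⟨k, rfl⟩ := Nat.exists_eq_add_of_le hen
    have hle : U ≤ (homogeneousSubmodule (Fin 2) K k).map (LinearMap.mulLeft K Q) := fun f hf => by
      obtain ⟨q, hq, rfl⟩ := exists_isHomogeneous_eq_mul_of_dvd hQ (hU hf) (hdvd f hf)
      exact ⟨q, hq, rfl⟩
    calc finrank K U ≤ finrank K (homogeneousSubmodule (Fin 2) K k) :=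
          (Submodule.finrank_mono hle).trans (Submodule.finrank_map_le _ _)
      _ = e + k + 1 - e := by
        rw [finrank_homogeneousSubmodule, Fintype.card_fin, show 2 + k - 1 = k + 1 by omega,
          Nat.choose_succ_self_right]
        omega
  · have : U = ⊥ := (Submodule.eq_bot_iff _).2 fun f hf =>
      eq_zero_of_dvd_of_isHomogeneous hQ (hU hf) hlt (hdvd f hf)
    rw [this, finrank_bot]
    exact Nat.zero_le _

end LinearForms

section PointIdeal

variable {K : Type} [Field K]

theorem eval_rep_eq_zero_of_mem_pointIdeal {p : P2 K} {f : MvPolynomial (Fin 3) K}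
    (hf : f ∈ pointIdeal p) : eval p.rep f = 0 := by
  have hle : pointIdeal p ≤ RingHom.ker (eval p.rep) := Ideal.span_le.2 fun g hg => hg.2
  exact hle hf

theorem exists_isHomogeneous_one_eval_rep_eq_one (p : P2 K) :
    ∃ φ : MvPolynomial (Fin 3) K, φ.IsHomogeneous 1 ∧ eval p.rep φ = 1 := by
  obtain ⟨j, hj⟩ := Function.ne_iff.1 p.rep_nonzero
  exact ⟨C (p.rep j)⁻¹ * X j, isHomogeneous_C_mul_X _ j, by simpa using inv_mul_cancel₀ hj⟩

theorem X_sub_C_mul_mem_pointIdeal {p : P2 K} {φ : MvPolynomial (Fin 3) K}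
    (hφ : φ.IsHomogeneous 1) (hφp : eval p.rep φ = 1) (i : Fin 3) :
    X i - C (p.rep i) * φ ∈ pointIdeal p :=
  Ideal.subset_span ⟨(isHomogeneous_X K i).sub (hφ.C_mul _), by simp [hφp]⟩

theorem eq_zero_of_mem_pointIdeal_pow {p : P2 K} {f : MvPolynomial (Fin 3) K} {m n : ℕ}
    (hf : f ∈ pointIdeal p ^ m) (hfn : f.IsHomogeneous n) (hnm : n < m) : f = 0 := by
  have hle : pointIdeal p ≤ idealOfVars (Fin 3) K := Ideal.span_le.2 fun g hg => by
    rw [SetLike.mem_coe, ← pow_one (idealOfVars _ _), mem_pow_idealOfVars_iff]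
    exact fun e he => (hg.1.degree_eq_sum_deg_support he).le
  by_contra hne
  obtain ⟨e, he⟩ := support_nonempty.2 hne
  have hme := (mem_pow_idealOfVars_iff m f).1 (Ideal.pow_right_mono hle m hf) e he
  have hen : n = e.degree := hfn.degree_eq_sum_deg_support he
  omega

open scoped Polynomial in
/-- The one-parameter family of linear substitutions `X i ↦ vᵢ φ + T (X i - vᵢ φ)`, where `v` is
the representative of `p` and `φ` is meant to be a linear form with `φ v = 1`. It is the identity
at `T = 1` and contracts the plane to `p` as `T → 0`, so the power of `T` dividing the image of a
polynomial measures its order of vanishing at `p`. -/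
noncomputable def contraction (p : P2 K) (φ : MvPolynomial (Fin 3) K) :
    MvPolynomial (Fin 3) K →ₐ[K] (MvPolynomial (Fin 3) K)[X] :=
  aeval fun i => Polynomial.C (C (p.rep i) * φ) +
    Polynomial.X * Polynomial.C (X i - C (p.rep i) * φ)

theorem eval_one_contraction (p : P2 K) (φ f : MvPolynomial (Fin 3) K) :
    Polynomial.eval 1 (contraction p φ f) = f := by
  have hid : ((Polynomial.aeval (1 : MvPolynomial (Fin 3) K)).restrictScalars K).comp
      (contraction p φ) = AlgHom.id K _ := algHom_ext fun i => by simp [contraction]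
  simpa [Polynomial.aeval_def] using DFunLike.congr_fun hid f

theorem X_dvd_contraction {p : P2 K} {g : MvPolynomial (Fin 3) K} (φ : MvPolynomial (Fin 3) K)
    (hg : g.IsHomogeneous 1) (hgp : eval p.rep g = 0) : Polynomial.X ∣ contraction p φ g := by
  obtain ⟨c, rfl⟩ := exists_eq_sum_smul_X_of_isHomogeneous_one hg
  have hc : ∑ i, c i * p.rep i = 0 := by simpa [smul_eval] using hgp
  have hcoeff : ∑ i, c i • (C (p.rep i) * φ) = 0 := by
    simp only [smul_eq_C_mul, ← mul_assoc, ← map_mul, ← Finset.sum_mul, ← map_sum, hc, map_zero,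
      zero_mul]
  rw [Polynomial.X_dvd_iff]
  simpa [contraction, Polynomial.finsetSum_coeff] using hcoeff

theorem contraction_mem_reesAlgebra {p : P2 K} {φ : MvPolynomial (Fin 3) K}
    (hφ : φ.IsHomogeneous 1) (hφp : eval p.rep φ = 1) (f : MvPolynomial (Fin 3) K) :
    contraction p φ f ∈ reesAlgebra (pointIdeal p) := by
  have hX (i : Fin 3) : contraction p φ (X i) ∈ reesAlgebra (pointIdeal p) := by
    rw [contraction, aeval_X, Polynomial.X_mul_C, ← pow_one Polynomial.X,
      Polynomial.C_mul_X_pow_eq_monomial]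
    exact add_mem (algebraMap_mem _ _) (reesAlgebra.monomial_mem.2 (by
      simpa using X_sub_C_mul_mem_pointIdeal hφ hφp i))
  induction f using MvPolynomial.induction_on with
  | C a =>
    rw [← algebraMap_eq, AlgHom.commutes]
    exact algebraMap_mem (reesAlgebra (pointIdeal p)) (C a)
  | add f g hf hg => rw [map_add]; exact add_mem hf hg
  | mul_X f i hf => rw [map_mul]; exact mul_mem hf (hX i)

theorem mem_pointIdeal_pow_iff_X_pow_dvd_contraction {p : P2 K} {φ : MvPolynomial (Fin 3) K}
    (hφ : φ.IsHomogeneous 1) (hφp : eval p.rep φ = 1) {f : MvPolynomial (Fin 3) K} {m : ℕ} :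
    f ∈ pointIdeal p ^ m ↔ Polynomial.X ^ m ∣ contraction p φ f := by
  refine ⟨fun hf => ?_, fun hf => ?_⟩
  · have hle : pointIdeal p ≤ (Ideal.span {Polynomial.X}).comap (contraction p φ) :=
      Ideal.span_le.2 fun g hg =>
        Ideal.mem_comap.2 (Ideal.mem_span_singleton.2 (X_dvd_contraction φ hg.1 hg.2))
    have hmem := Ideal.le_comap_pow _ m (Ideal.pow_right_mono hle m hf)
    rwa [Ideal.mem_comap, Ideal.span_singleton_pow, Ideal.mem_span_singleton] at hmem
  · rw [← eval_one_contraction p φ f, Polynomial.eval_eq_sum]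
    refine Ideal.sum_mem _ fun i _ => Ideal.mul_mem_right _ _ ?_
    by_cases him : i < m
    · rw [Polynomial.X_pow_dvd_iff.1 hf i him]
      exact zero_mem _
    · exact Ideal.pow_le_pow_right (not_lt.1 him)
        ((mem_reesAlgebra_iff _ _).1 (contraction_mem_reesAlgebra hφ hφp f) i)

theorem mem_pointIdeal_pow_of_mul_mem_pow_add {p : P2 K} {l g : MvPolynomial (Fin 3) K} {k m : ℕ}
    (hl : l ∉ pointIdeal p ^ (k + 1)) (h : l * g ∈ pointIdeal p ^ (m + k)) :
    g ∈ pointIdeal p ^ m := by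
  obtain ⟨φ, hφ, hφp⟩ := exists_isHomogeneous_one_eval_rep_eq_one p
  rw [mem_pointIdeal_pow_iff_X_pow_dvd_contraction hφ hφp] at hl h ⊢
  rw [← emultiplicity_lt_iff_not_dvd, Nat.cast_succ] at hl
  rw [map_mul, pow_dvd_iff_le_emultiplicity, emultiplicity_mul Polynomial.prime_X,
    Nat.cast_add, add_comm] at h
  rw [pow_dvd_iff_le_emultiplicity]
  exact (ENat.add_le_add_iff_left (ENat.natCast_ne_top k)).1
    (h.trans (add_le_add_left (Order.le_of_lt_add_one hl) _))

end PointIdeal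

section FatPoints

variable {K : Type} [Field K]

/-- The forms of degree `t` in the ideal of the fat point scheme `∑ μ p • p`, that is, vanishing to
order at least `μ p` at every point `p`. -/
noncomputable def fatForms (μ : P2 K →₀ ℕ) (t : ℕ) : Submodule K (MvPolynomial (Fin 3) K) :=
  homogeneousSubmodule (Fin 3) K t ⊓ ⨅ p, (pointIdeal p ^ μ p).restrictScalars K

/-- The length of the fat point scheme `∑ μ p • p`: its number of conditions on forms of large
degree. -/
def schemeLength (μ : P2 K →₀ ℕ) : ℕ :=
  μ.sum fun _ n => (n + 1).choose 2

theorem finrank_homogeneousSubmodule_fin_three (t : ℕ) :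
    finrank K (homogeneousSubmodule (Fin 3) K t) = (t + 2).choose 2 := by
  rw [finrank_homogeneousSubmodule, Fintype.card_fin, show 3 + t - 1 = 2 + t by omega,
    ← Nat.choose_symm_add, add_comm]

theorem finrank_homogeneousSubmodule_fin_three_succ (t : ℕ) :
    finrank K (homogeneousSubmodule (Fin 3) K (t + 1)) =
      finrank K (homogeneousSubmodule (Fin 3) K t) + (t + 2) := by
  rw [finrank_homogeneousSubmodule_fin_three, finrank_homogeneousSubmodule_fin_three,
    Nat.choose_succ_succ' (t + 2), Nat.choose_one_right, add_comm]

variable {μ : P2 K →₀ ℕ} {t : ℕ}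

theorem fatForms_le_homogeneousSubmodule : fatForms μ t ≤ homogeneousSubmodule (Fin 3) K t :=
  inf_le_left

instance : FiniteDimensional K (fatForms μ t) :=
  Submodule.finiteDimensional_of_le fatForms_le_homogeneousSubmodule

theorem mem_fatForms {f : MvPolynomial (Fin 3) K} :
    f ∈ fatForms μ t ↔ f.IsHomogeneous t ∧ ∀ p, f ∈ pointIdeal p ^ μ p := by
  simp [fatForms]

@[simp]
theorem fatForms_zero : fatForms (0 : P2 K →₀ ℕ) t = homogeneousSubmodule (Fin 3) K t := by
  ext f
  simp [mem_fatForms]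

theorem mem_fatForms_single {p : P2 K} {n : ℕ} {f : MvPolynomial (Fin 3) K} :
    f ∈ fatForms (Finsupp.single p n) t ↔ f.IsHomogeneous t ∧ f ∈ pointIdeal p ^ n := by
  classical
  rw [mem_fatForms]
  refine and_congr_right fun _ => ⟨fun h => by simpa using h p, fun h q => ?_⟩
  by_cases hpq : p = q
  · simpa [hpq] using hpq ▸ h
  · simp [hpq]

theorem homogeneousSubmodule_succ_le_map_mul_sup {p : P2 K} {φ : MvPolynomial (Fin 3) K} {n : ℕ}
    (hφ : φ.IsHomogeneous 1) (hφp : eval p.rep φ = 1) (hnt : n ≤ t + 1) :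
    homogeneousSubmodule (Fin 3) K (t + 1) ≤
      (homogeneousSubmodule (Fin 3) K t).map (LinearMap.mulLeft K φ) ⊔
        fatForms (Finsupp.single p n) (t + 1) := by
  intro f hf
  let y i : MvPolynomial (Fin 3) K := X i - C (p.rep i) * φ
  have hy : (aeval y f).IsHomogeneous (t + 1) := by
    simpa using hf.aeval y (n := 1) fun i => (isHomogeneous_X K i).sub (hφ.C_mul _)
  have hdvd : φ ∣ f - aeval y f := by
    rw [← Ideal.mem_span_singleton]
    simpa using aeval_sub_aeval_mem (x := X) (y := y) (I := Ideal.span {φ})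
      (fun i => by simp [y, Ideal.mem_span_singleton]) f
  obtain ⟨q, hq, hfq⟩ := exists_isHomogeneous_eq_mul_of_dvd hφ
    (by rw [add_comm 1 t]; exact hf.sub hy) hdvd
  have hyp : aeval y f ∈ pointIdeal p ^ n := Ideal.pow_le_pow_right hnt
    (aeval_mem_pow_of_isHomogeneous (X_sub_C_mul_mem_pointIdeal hφ hφp) hf)
  exact Submodule.mem_sup.2 ⟨φ * q, ⟨q, hq, rfl⟩, aeval y f, mem_fatForms_single.2 ⟨hy, hyp⟩,
    by rw [← hfq, sub_add_cancel]⟩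

theorem finrank_homogeneousSubmodule_succ_add_le {p : P2 K} {n : ℕ} (hnt : n ≤ t + 1) :
    finrank K (homogeneousSubmodule (Fin 3) K (t + 1)) +
        finrank K (fatForms (Finsupp.single p n) t) ≤
      finrank K (homogeneousSubmodule (Fin 3) K t) +
        finrank K (fatForms (Finsupp.single p n) (t + 1)) := by
  obtain ⟨φ, hφ, hφp⟩ := exists_isHomogeneous_one_eval_rep_eq_one p
  have hinj : Function.Injective (LinearMap.mulLeft K φ) :=
    mul_right_injective₀ (by rintro rfl; simp at hφp)
  set U := (homogeneousSubmodule (Fin 3) K t).map (LinearMap.mulLeft K φ)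
  set W := fatForms (Finsupp.single p n) (t + 1)
  have hU : finrank K U = finrank K (homogeneousSubmodule (Fin 3) K t) :=
    finrank_map_of_injective hinj _
  have hsup : homogeneousSubmodule (Fin 3) K (t + 1) ≤ U ⊔ W :=
    homogeneousSubmodule_succ_le_map_mul_sup hφ hφp hnt
  have hinf : (fatForms (Finsupp.single p n) t).map (LinearMap.mulLeft K φ) ≤ U ⊓ W := by
    rintro _ ⟨f, hf, rfl⟩
    obtain ⟨hft, hfp⟩ := mem_fatForms_single.1 hf
    refine ⟨⟨f, hft, rfl⟩, mem_fatForms_single.2 ⟨?_, Ideal.mul_mem_left _ _ hfp⟩⟩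
    rw [add_comm]
    exact hφ.mul hft
  calc _ ≤ finrank K ↥(U ⊔ W) + finrank K ↥(U ⊓ W) :=
        add_le_add (Submodule.finrank_mono hsup)
          ((finrank_map_of_injective hinj _).ge.trans (Submodule.finrank_mono hinf))
    _ = _ := by rw [Submodule.finrank_sup_add_finrank_inf_eq, hU]

theorem finrank_homogeneousSubmodule_le_add_choose (p : P2 K) (n t : ℕ) :
    finrank K (homogeneousSubmodule (Fin 3) K t) ≤
      finrank K (fatForms (Finsupp.single p n) t) + (n + 1).choose 2 := by
  obtain rfl | hn := n.eq_zero_or_pos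
  · rw [Finsupp.single_zero, fatForms_zero]
    exact Nat.le_add_right _ _
  induction t with
  | zero =>
    rw [finrank_homogeneousSubmodule_fin_three]
    exact (Nat.choose_le_choose 2 (by omega)).trans (Nat.le_add_left _ _)
  | succ t ih =>
    obtain hlt | hle := lt_or_ge (t + 1) n
    · rw [finrank_homogeneousSubmodule_fin_three]
      exact (Nat.choose_le_choose 2 (by omega)).trans (Nat.le_add_left _ _)
    · have := finrank_homogeneousSubmodule_succ_add_le (p := p) hle
      omega

theorem fatForms_add_single {p : P2 K} {n : ℕ} (hp : p ∉ μ.support) :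
    fatForms (Finsupp.single p n + μ) t = fatForms (Finsupp.single p n) t ⊓ fatForms μ t := by
  classical
  ext f
  rw [Submodule.mem_inf, mem_fatForms_single, mem_fatForms, mem_fatForms]
  refine ⟨fun ⟨hft, hf⟩ => ⟨⟨hft, ?_⟩, hft, fun q => ?_⟩, fun ⟨⟨hft, hfp⟩, _, hf⟩ =>
    ⟨hft, fun q => ?_⟩⟩
  · simpa [Finsupp.notMem_support_iff.1 hp] using hf p
  · exact Ideal.pow_le_pow_right (by simp) (hf q)
  · by_cases hpq : p = q
    · subst hpq
      simpa [Finsupp.notMem_support_iff.1 hp] using hfp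
    · simpa [hpq] using hf q

theorem finrank_homogeneousSubmodule_le_add_schemeLength (μ : P2 K →₀ ℕ) (t : ℕ) :
    finrank K (homogeneousSubmodule (Fin 3) K t) ≤
      finrank K (fatForms μ t) + schemeLength μ := by
  induction μ using Finsupp.induction with
  | zero =>
    rw [fatForms_zero]
    exact Nat.le_add_right _ _
  | single_add p n μ hp _ ih =>
    have hlen : schemeLength (Finsupp.single p n + μ) = (n + 1).choose 2 + schemeLength μ := by
      rw [schemeLength, Finsupp.sum_add_index_of_disjoint, Finsupp.sum_single_index (by simp),
        schemeLength]
      exact Finset.disjoint_of_subset_left Finsupp.support_single_subset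
        (Finset.disjoint_singleton_left.2 hp)
    have hmod := Submodule.finrank_sup_add_finrank_inf_eq (fatForms (Finsupp.single p n) t)
      (fatForms μ t)
    have hsup := Submodule.finrank_mono (sup_le (fatForms_le_homogeneousSubmodule (t := t)
      (μ := Finsupp.single p n)) (fatForms_le_homogeneousSubmodule (μ := μ)))
    have hsingle := finrank_homogeneousSubmodule_le_add_choose p n t
    rw [fatForms_add_single hp, hlen]
    omega

end FatPoints

section Lines

variable {K : Type} [Field K] {L L' : ProjLine K} {p q : P2 K}

theorem ProjLine.mem_points_iff : p ∈ L.points ↔ p.rep ∈ L.toSubmodule := by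
  rw [ProjLine.points, Set.mem_ofPred_eq, Projectivization.submodule_eq,
    Submodule.span_singleton_le_iff_mem]

theorem ProjLine.eq_of_mem_points (hpq : p ≠ q) (hp : p ∈ L.points) (hq : q ∈ L.points)
    (hp' : p ∈ L'.points) (hq' : q ∈ L'.points) : L = L' := by
  have hspan (M : ProjLine K) (hpM : p ∈ M.points) (hqM : q ∈ M.points) :
      Submodule.span K (Set.range ![p.rep, q.rep]) = M.toSubmodule := by
    refine Submodule.eq_of_le_of_finrank_eq (Submodule.span_le.2 ?_) ?_
    · rw [Matrix.range_cons_cons_empty]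
      exact Set.pair_subset (mem_points_iff.1 hpM) (mem_points_iff.1 hqM)
    · rw [finrank_span_eq_card (Projectivization.linearIndependent_pair_iff_ne.2 hpq),
        Fintype.card_fin, M.finrank_eq_two]
  have := (hspan L hp hq).symm.trans (hspan L' hp' hq')
  cases L
  congr

theorem ProjLine.exists_isEquation (L : ProjLine K) : ∃ l, IsEquation L.toSubmodule l :=
  _root_.exists_isEquation (by rw [L.finrank_eq_two, Fintype.card_fin])

theorem ProjLine.exists_injective_range_eq (L : ProjLine K) :
    ∃ f : (Fin 2 → K) →ₗ[K] (Fin 3 → K),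
      Function.Injective f ∧ LinearMap.range f = L.toSubmodule := by
  let e := (finBasisOfFinrankEq K L.toSubmodule L.finrank_eq_two).equivFun
  exact ⟨L.toSubmodule.subtype ∘ₗ e.symm.toLinearMap,
    L.toSubmodule.injective_subtype.comp e.symm.injective,
    by rw [LinearEquiv.range_comp, Submodule.range_subtype]⟩

theorem IsEquation.pow_dvd_pullback {τ : Type*} [Fintype τ] [DecidableEq τ]
    {f : (τ → K) →ₗ[K] (Fin 3 → K)} {l : MvPolynomial τ K} (hl : IsEquation (p.submodule.comap f) l)
    {g : MvPolynomial (Fin 3) K} {n : ℕ} (hg : g ∈ pointIdeal p ^ n) : l ^ n ∣ pullback f g := by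
  have hle : pointIdeal p ≤ (Ideal.span {l}).comap (pullback f) :=
    Ideal.span_le.2 fun h ⟨hh, hhp⟩ => Ideal.mem_span_singleton.2 <|
      hl.dvd (isHomogeneous_pullback f hh) fun v hv => by
        rw [Submodule.mem_comap, Projectivization.submodule_eq, Submodule.mem_span_singleton] at hv
        obtain ⟨c, hc⟩ := hv
        obtain ⟨a, rfl⟩ := exists_eq_sum_smul_X_of_isHomogeneous_one hh
        rw [eval_pullback, ← hc]
        simp only [map_sum, smul_eval, eval_X, Pi.smul_apply, smul_eq_mul] at hhp ⊢
        simp only [mul_left_comm _ c, ← Finset.mul_sum, hhp, mul_zero]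
  have hmem := Ideal.le_comap_pow _ n (Ideal.pow_right_mono hle n hg)
  rwa [Ideal.mem_comap, Ideal.span_singleton_pow, Ideal.mem_span_singleton] at hmem

end Lines

section Residual

variable {K : Type} [Field K] {L : ProjLine K} {μ : P2 K →₀ ℕ} {p q : P2 K} {t : ℕ}

/-- The degree of the intersection of the fat point scheme `∑ μ p • p` with the line `L`. -/
noncomputable def ProjLine.degOn (L : ProjLine K) (μ : P2 K →₀ ℕ) : ℕ :=
  ∑ p ∈ μ.support, L.points.indicator μ p

/-- The residual scheme of `∑ μ p • p` with respect to the line `L`, defined by the ideal quotient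
of the ideal of `∑ μ p • p` by the equation of `L`. -/
noncomputable def ProjLine.residual (L : ProjLine K) (μ : P2 K →₀ ℕ) : P2 K →₀ ℕ :=
  Finsupp.onFinset μ.support (fun p => μ p - L.points.indicator 1 p) fun p hp =>
    Finsupp.mem_support_iff.2 fun h => hp (by rw [h, Nat.zero_sub])

theorem ProjLine.support_residual_subset : (L.residual μ).support ⊆ μ.support :=
  Finsupp.support_onFinset_subset

theorem ProjLine.residual_apply_of_mem (hp : p ∈ L.points) : L.residual μ p = μ p - 1 :=
  congrArg (μ p - ·) (Set.indicator_of_mem hp 1)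

theorem ProjLine.residual_apply_of_notMem (hp : p ∉ L.points) : L.residual μ p = μ p :=
  congrArg (μ p - ·) (Set.indicator_of_notMem hp 1)

theorem ProjLine.schemeLength_eq_residual_add_degOn (L : ProjLine K) (μ : P2 K →₀ ℕ) :
    schemeLength μ = schemeLength (L.residual μ) + L.degOn μ := by
  have hres : schemeLength (L.residual μ) = ∑ p ∈ μ.support, (L.residual μ p + 1).choose 2 :=
    Finsupp.sum_of_support_subset _ support_residual_subset _ fun _ _ => rfl
  rw [hres, schemeLength, Finsupp.sum, ProjLine.degOn, ← Finset.sum_add_distrib]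
  refine Finset.sum_congr rfl fun p hp => ?_
  obtain ⟨n, hn⟩ := Nat.exists_eq_succ_of_ne_zero (Finsupp.mem_support_iff.1 hp)
  by_cases hpL : p ∈ L.points
  · rw [residual_apply_of_mem hpL, Set.indicator_of_mem hpL, hn, Nat.succ_sub_one,
      Nat.choose_succ_succ' (n + 1), Nat.choose_one_right, add_comm]
  · rw [residual_apply_of_notMem hpL, Set.indicator_of_notMem hpL, add_zero]

theorem ProjLine.map_mulLeft_fatForms_residual_le {l : MvPolynomial (Fin 3) K}
    (hl : IsEquation L.toSubmodule l) :
    (fatForms (L.residual μ) t).map (LinearMap.mulLeft K l) ≤ fatForms μ (t + 1) := by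
  rintro _ ⟨g, hg, rfl⟩
  obtain ⟨hgt, hgp⟩ := mem_fatForms.1 hg
  refine mem_fatForms.2 ⟨add_comm t 1 ▸ hl.isHomogeneous.mul hgt, fun p => ?_⟩
  specialize hgp p
  by_cases hp : p ∈ L.points
  · rw [residual_apply_of_mem hp] at hgp
    have hlp : l ∈ pointIdeal p :=
      Ideal.subset_span ⟨hl.isHomogeneous, (hl.mem_iff _).1 (mem_points_iff.1 hp)⟩
    exact Ideal.pow_le_pow_right (by omega) (pow_succ' (pointIdeal p) _ ▸ Ideal.mul_mem_mul hlp hgp)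
  · rw [residual_apply_of_notMem hp] at hgp
    exact Ideal.mul_mem_left _ _ hgp

theorem IsEquation.mem_fatForms_residual {l g : MvPolynomial (Fin 3) K}
    (hl : IsEquation L.toSubmodule l) (hg : g.IsHomogeneous t)
    (hlg : l * g ∈ fatForms μ (t + 1)) : g ∈ fatForms (L.residual μ) t := by
  refine mem_fatForms.2 ⟨hg, fun p => ?_⟩
  have hlgp := (mem_fatForms.1 hlg).2 p
  by_cases hp : p ∈ L.points
  · rw [ProjLine.residual_apply_of_mem hp]
    obtain h0 | hpos := (μ p).eq_zero_or_pos
    · simp [h0]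
    · refine mem_pointIdeal_pow_of_mul_mem_pow_add (k := 1) (fun h => hl.ne_zero ?_)
        (by rwa [Nat.sub_add_cancel hpos])
      exact eq_zero_of_mem_pointIdeal_pow h hl.isHomogeneous one_lt_two
  · rw [ProjLine.residual_apply_of_notMem hp]
    refine mem_pointIdeal_pow_of_mul_mem_pow_add (k := 0) (fun h => hp ?_) hlgp
    rw [zero_add, pow_one] at h
    exact ProjLine.mem_points_iff.2 ((hl.mem_iff _).2 (eval_rep_eq_zero_of_mem_pointIdeal h))

theorem ProjLine.fatForms_inf_ker_pullback_le {l : MvPolynomial (Fin 3) K}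
    (hl : IsEquation L.toSubmodule l) {f : (Fin 2 → K) →ₗ[K] (Fin 3 → K)}
    (hf : Function.Injective f) (hfL : LinearMap.range f = L.toSubmodule) :
    fatForms μ (t + 1) ⊓ LinearMap.ker (pullback f).toLinearMap ≤
      (fatForms (L.residual μ) t).map (LinearMap.mulLeft K l) := by
  rintro g ⟨hg, hgf⟩
  obtain ⟨q, hq, rfl⟩ := exists_isHomogeneous_eq_mul_of_dvd hl.isHomogeneous
    (add_comm t 1 ▸ (mem_fatForms.1 hg).1) (hl.dvd_of_pullback_eq_zero hf hfL.ge hgf)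
  exact ⟨q, hl.mem_fatForms_residual hq hg, rfl⟩

theorem eq_of_comap_submodule_le {f : (Fin 2 → K) →ₗ[K] (Fin 3 → K)}
    (hp : p.submodule ≤ LinearMap.range f)
    (hpq : p.submodule.comap f ≤ q.submodule.comap f) : p = q := by
  have hle : p.submodule ≤ q.submodule := by
    rw [← Submodule.map_comap_eq_of_le hp]
    exact Submodule.map_le_iff_le_comap.2 hpq
  refine Projectivization.submodule_injective (Submodule.eq_of_le_of_finrank_eq hle ?_)
  rw [p.finrank_submodule, q.finrank_submodule]

theorem exists_isEquation_comap_submodule {f : (Fin 2 → K) →ₗ[K] (Fin 3 → K)}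
    (hf : Function.Injective f) (hp : p.submodule ≤ LinearMap.range f) :
    ∃ l, IsEquation (p.submodule.comap f) l := by
  refine exists_isEquation ?_
  rw [← finrank_map_of_injective hf, Submodule.map_comap_eq_of_le hp, p.finrank_submodule,
    Fintype.card_fin]

theorem ProjLine.finrank_map_pullback_fatForms_le {f : (Fin 2 → K) →ₗ[K] (Fin 3 → K)}
    (hf : Function.Injective f) (hfL : LinearMap.range f = L.toSubmodule) :
    finrank K ((fatForms μ t).map (pullback f).toLinearMap) ≤ t + 1 - L.degOn μ := by
  choose! l hl using fun p (hp : p ∈ L.points) =>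
    exists_isEquation_comap_submodule hf (hfL.symm ▸ hp : p.submodule ≤ LinearMap.range f)
  classical
  let Q := ∏ p ∈ μ.support with p ∈ L.points, l p ^ μ p
  have hQ : Q.IsHomogeneous (L.degOn μ) := by
    rw [ProjLine.degOn, Finset.sum_indicator_eq_sum_filter]
    refine IsHomogeneous.prod _ _ _ fun p hp => ?_
    simpa using (hl p (Finset.mem_filter.1 hp).2).isHomogeneous.pow (μ p)
  refine finrank_le_of_forall_dvd hQ ?_ ?_
  · rintro _ ⟨g, hg, rfl⟩
    exact isHomogeneous_pullback f (mem_fatForms.1 hg).1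
  · rintro _ ⟨g, hg, rfl⟩
    refine Finset.prod_dvd_of_isRelPrime (fun p hp q hq hpq => ?_) fun p hp =>
      (hl p (Finset.mem_filter.1 hp).2).pow_dvd_pullback ((mem_fatForms.1 hg).2 p)
    have hp := (Finset.mem_filter.1 hp).2
    have hq := (Finset.mem_filter.1 hq).2
    exact ((hl p hp).isRelPrime (hl q hq) fun hle => hpq
      (eq_of_comap_submodule_le (hfL.symm ▸ hp) hle)).pow

/-- The superabundance of the fat point scheme `∑ μ p • p` in degree `t`: the dimension of its space
of forms of degree `t` exceeds by this amount the one expected from counting conditions. -/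
noncomputable def superabundance (μ : P2 K →₀ ℕ) (t : ℕ) : ℤ :=
  finrank K (fatForms μ t) + schemeLength μ - finrank K (homogeneousSubmodule (Fin 3) K t)

@[simp]
theorem superabundance_zero (t : ℕ) : superabundance (0 : P2 K →₀ ℕ) t = 0 := by
  rw [superabundance, fatForms_zero, schemeLength, Finsupp.sum_zero_index, Nat.cast_zero, add_zero,
    sub_self]

theorem superabundance_nonneg (μ : P2 K →₀ ℕ) (t : ℕ) : 0 ≤ superabundance μ t := by
  have := finrank_homogeneousSubmodule_le_add_schemeLength μ t
  rw [superabundance]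
  omega

theorem ProjLine.superabundance_residual_add_le (L : ProjLine K) (μ : P2 K →₀ ℕ) (t : ℕ) :
    superabundance (L.residual μ) t + (L.degOn μ - (t + 2)) ≤ superabundance μ (t + 1) := by
  obtain ⟨l, hl⟩ := L.exists_isEquation
  have hle := Submodule.finrank_mono (map_mulLeft_fatForms_residual_le (μ := μ) (t := t) hl)
  rw [finrank_map_of_injective (mul_right_injective₀ hl.ne_zero)] at hle
  have hlen := L.schemeLength_eq_residual_add_degOn μ
  simp only [superabundance, finrank_homogeneousSubmodule_fin_three_succ]
  omega

theorem ProjLine.superabundance_succ_le (L : ProjLine K) (μ : P2 K →₀ ℕ) (t : ℕ) :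
    superabundance μ (t + 1) ≤
      superabundance (L.residual μ) t + max 0 (L.degOn μ - (t + 2)) := by
  obtain ⟨l, hl⟩ := L.exists_isEquation
  obtain ⟨f, hf, hfL⟩ := L.exists_injective_range_eq
  have hmap := finrank_map_pullback_fatForms_le (μ := μ) (t := t + 1) hf hfL
  have hker := Submodule.finrank_mono (fatForms_inf_ker_pullback_le (μ := μ) (t := t) hl hf hfL)
  rw [finrank_map_of_injective (mul_right_injective₀ hl.ne_zero)] at hker
  have hsum := finrank_map_add_finrank_inf_ker (fatForms μ (t + 1)) (pullback f).toLinearMap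
  have hlen := L.schemeLength_eq_residual_add_degOn μ
  simp only [superabundance, finrank_homogeneousSubmodule_fin_three_succ]
  omega

end Residual

section IteratedResidual

variable {K : Type} [Field K] {L L' : ProjLine K} {μ : P2 K →₀ ℕ} {p : P2 K} {t T : ℕ}

theorem ProjLine.degOn_eq_sum_of_support_subset {S : Finset (P2 K)} (hS : μ.support ⊆ S) :
    L.degOn μ = ∑ p ∈ S, L.points.indicator μ p :=
  Finset.sum_subset hS fun p _ hp => by
    rw [Set.indicator_apply_eq_zero]
    exact fun _ => Finsupp.notMem_support_iff.1 hp

theorem ProjLine.degOn_le_degOn_residual_add_one (hL : L' ≠ L) :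
    L.degOn μ ≤ L.degOn (L'.residual μ) + 1 := by
  classical
  have hcard : #{p ∈ μ.support | p ∈ L.points ∩ L'.points} ≤ 1 := Finset.card_le_one.2
    fun p hp q hq => by
      obtain ⟨hpL, hpL'⟩ := (Finset.mem_filter.1 hp).2
      obtain ⟨hqL, hqL'⟩ := (Finset.mem_filter.1 hq).2
      by_contra hpq
      exact hL (eq_of_mem_points hpq hpL' hqL' hpL hqL)
  refine le_trans ?_ (Nat.add_le_add_left hcard _)
  rw [degOn_eq_sum_of_support_subset (μ := L'.residual μ) support_residual_subset,
    ProjLine.degOn, Finset.card_filter, ← Finset.sum_add_distrib]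
  refine Finset.sum_le_sum fun p _ => ?_
  by_cases hp : p ∈ L.points <;> by_cases hp' : p ∈ L'.points
  · simp [hp, hp', residual_apply_of_mem, Nat.le_add_of_sub_le]
  · simp [hp, hp', residual_apply_of_notMem]
  all_goals simp [hp]

variable {ι : Type*} {Ls : ι → ProjLine K} {J : Finset ι}

/-- The result of taking successive residual schemes with respect to the lines `Ls i`, `i ∈ J`. -/
noncomputable def iteratedResidual (Ls : ι → ProjLine K) (J : Finset ι) (μ : P2 K →₀ ℕ) :
    P2 K →₀ ℕ :=
  Finsupp.onFinset μ.support (fun p => μ p - ∑ i ∈ J, (Ls i).points.indicator 1 p) fun p hp =>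
    Finsupp.mem_support_iff.2 fun h => hp (by rw [h, Nat.zero_sub])

theorem iteratedResidual_apply :
    iteratedResidual Ls J μ p = μ p - ∑ i ∈ J, (Ls i).points.indicator 1 p := rfl

theorem support_iteratedResidual_subset : (iteratedResidual Ls J μ).support ⊆ μ.support :=
  Finsupp.support_onFinset_subset

theorem iteratedResidual_apply_le : iteratedResidual Ls J μ p ≤ μ p := Nat.sub_le _ _

theorem iteratedResidual_apply_le_sub_one {i : ι} (hi : i ∈ J) (hp : p ∈ (Ls i).points) :
    iteratedResidual Ls J μ p ≤ μ p - 1 :=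
  Nat.sub_le_sub_left ((Set.indicator_of_mem hp 1).ge.trans
    (Finset.single_le_sum (f := fun i => (Ls i).points.indicator 1 p) (fun _ _ => Nat.zero_le _)
      hi)) _

@[simp]
theorem iteratedResidual_empty : iteratedResidual Ls ∅ μ = μ := by
  ext p
  simp [iteratedResidual_apply]

theorem iteratedResidual_insert [DecidableEq ι] {a : ι} (ha : a ∉ J) :
    iteratedResidual Ls (insert a J) μ = (Ls a).residual (iteratedResidual Ls J μ) := by
  ext p
  change μ p - _ = μ p - _ - _
  rw [Finset.sum_insert ha, add_comm, Nat.sub_add_eq]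

theorem ProjLine.degOn_le_degOn_iteratedResidual_add_card (hL : ∀ i ∈ J, Ls i ≠ L) :
    L.degOn μ ≤ L.degOn (iteratedResidual Ls J μ) + #J := by
  classical
  induction J using Finset.induction_on with
  | empty => simp
  | insert a J ha ih =>
    have hstep := degOn_le_degOn_residual_add_one (μ := iteratedResidual Ls J μ)
      (hL a (Finset.mem_insert_self a J))
    rw [← iteratedResidual_insert ha] at hstep
    have := ih fun i hi => hL i (Finset.mem_insert_of_mem hi)
    rw [Finset.card_insert_of_notMem ha]
    omega

variable [LinearOrder ι] {a b : ι}

/-- Taking residual schemes with respect to the lines `Ls b`, `b ∈ J`, in decreasing order and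
starting from forms of degree `T`, this is the degree of the scheme met on `Ls a` minus the number
of coefficients of a form on `Ls a` of the degree reached at that stage. -/
noncomputable def excess (Ls : ι → ProjLine K) (J : Finset ι) (μ : P2 K →₀ ℕ) (T : ℕ) (a : ι) :
    ℤ :=
  (Ls a).degOn (iteratedResidual Ls {b ∈ J | a < b} μ) + #{b ∈ J | a < b} - (T + 1)

theorem excess_insert_self (ha : ∀ b ∈ J, a < b) : excess Ls (insert a J) μ T a =
    (Ls a).degOn (iteratedResidual Ls J μ) + #J - (T + 1) := by
  rw [excess, Finset.filter_insert, if_neg (lt_irrefl a), Finset.filter_true_of_mem ha]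

theorem sum_excess_insert (φ : ℤ → ℤ) (ha : ∀ b ∈ J, a < b) :
    ∑ b ∈ insert a J, φ (excess Ls (insert a J) μ T b) =
      φ ((Ls a).degOn (iteratedResidual Ls J μ) + #J - (T + 1)) +
        ∑ b ∈ J, φ (excess Ls J μ T b) := by
  rw [Finset.sum_insert fun h => lt_irrefl a (ha a h), excess_insert_self ha]
  refine congrArg _ (Finset.sum_congr rfl fun b hb => ?_)
  rw [excess, excess, Finset.filter_insert, if_neg (ha b hb).not_gt]

theorem superabundance_iteratedResidual_add_sum_excess_le (hT : t + #J = T) :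
    superabundance (iteratedResidual Ls J μ) t + ∑ a ∈ J, excess Ls J μ T a ≤
      superabundance μ T := by
  induction J using Finset.induction_on_min generalizing t with
  | empty => simp [← hT]
  | insert a J ha ih =>
    have haJ : a ∉ J := fun h => lt_irrefl a (ha a h)
    rw [Finset.card_insert_of_notMem haJ] at hT
    have hstep := (Ls a).superabundance_residual_add_le (iteratedResidual Ls J μ) t
    have hsum := sum_excess_insert (Ls := Ls) (μ := μ) (T := T) id ha
    have := ih (t := t + 1) (by omega)
    rw [iteratedResidual_insert haJ]
    simp only [id] at hsum
    omega

theorem superabundance_le_superabundance_iteratedResidual_add_sum_excess (hT : t + #J = T) :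
    superabundance μ T ≤
      superabundance (iteratedResidual Ls J μ) t + ∑ a ∈ J, max 0 (excess Ls J μ T a) := by
  induction J using Finset.induction_on_min generalizing t with
  | empty => simp [← hT]
  | insert a J ha ih =>
    have haJ : a ∉ J := fun h => lt_irrefl a (ha a h)
    rw [Finset.card_insert_of_notMem haJ] at hT
    have hstep := (Ls a).superabundance_succ_le (iteratedResidual Ls J μ) t
    have hsum := sum_excess_insert (Ls := Ls) (μ := μ) (T := T) (max 0) ha
    have := ih (t := t + 1) (by omega)
    rw [iteratedResidual_insert haJ]
    omega

end IteratedResidual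

section KConfig

variable {K : Type} [Field K] {X : Set (P2 K)} {μ : P2 K →₀ ℕ} {L : ProjLine K} {m n t D : ℕ}

theorem exists_coe_eq_indicator (hX : X.Finite) (m : ℕ) :
    ∃ μ : P2 K →₀ ℕ, ⇑μ = X.indicator fun _ => m :=
  ⟨Finsupp.ofSupportFinite _ (hX.subset Set.support_indicator_subset), rfl⟩

theorem support_subset_toFinset (hX : X.Finite) (hμ : ⇑μ ≤ X.indicator fun _ => m) :
    μ.support ⊆ hX.toFinset := fun p hp => by
  rw [hX.mem_toFinset]
  by_contra hpX
  have := hμ p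
  rw [Set.indicator_of_notMem hpX, Nat.le_zero] at this
  exact Finsupp.mem_support_iff.1 hp this

theorem sum_toFinset_indicator (hX : X.Finite) {A : Set (P2 K)} (hA : A ⊆ X) (m : ℕ) :
    ∑ p ∈ hX.toFinset, A.indicator (fun _ => m) p = m * A.ncard := by
  classical
  have hfilter : {p ∈ hX.toFinset | p ∈ A} = (hX.subset hA).toFinset := by
    ext p
    simpa using @hA p
  rw [Finset.sum_indicator_eq_sum_filter, hfilter, Finset.sum_const, smul_eq_mul, mul_comm,
    Set.ncard_eq_toFinset_card A (hX.subset hA)]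

theorem ProjLine.degOn_eq_mul_ncard (hX : X.Finite) (hμ : ⇑μ = X.indicator fun _ => m) :
    L.degOn μ = m * (X ∩ L.points).ncard := by
  rw [degOn_eq_sum_of_support_subset (support_subset_toFinset hX hμ.le), hμ,
    Set.indicator_indicator, Set.inter_comm, sum_toFinset_indicator hX Set.inter_subset_left]

namespace IsKConfig

variable {s : ℕ} {d : Fin s → ℕ} {Xs : Fin s → Set (P2 K)} {Ls : Fin s → ProjLine K} {i : Fin s}

theorem finite (hX : IsKConfig X d Xs Ls) : X.Finite := by
  rw [hX.union_eq]
  exact Set.finite_iUnion fun i => Set.finite_of_ncard_pos (hX.card_eq i ▸ hX.one_le i)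

theorem subset (hX : IsKConfig X d Xs Ls) (i : Fin s) : Xs i ⊆ X :=
  hX.union_eq ▸ Set.subset_iUnion Xs i

theorem add_card_Ioi_le (hX : IsKConfig X d Xs Ls) (hD : ∀ i, d i ≤ D) (i : Fin s) :
    d i + #(Finset.Ioi i) ≤ D := by
  have hcard : #(Finset.Ioi i) ≤ #(Finset.Ioc (d i) D) :=
    Finset.card_le_card_of_injOn d
      (fun j hj => Finset.mem_coe.2 <|
        Finset.mem_Ioc.2 ⟨hX.strictMono (Finset.mem_Ioi.1 hj), hD j⟩)
      hX.strictMono.injective.injOn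
  rw [Nat.card_Ioc] at hcard
  have := hD i
  omega

theorem exists_ge_mem (hX : IsKConfig X d Xs Ls) {p : P2 K} (hp : p ∈ X)
    (hpi : p ∈ (Ls i).points) : ∃ j, i ≤ j ∧ p ∈ Xs j := by
  rw [hX.union_eq, Set.mem_iUnion] at hp
  obtain ⟨j, hj⟩ := hp
  exact ⟨j, le_of_not_gt fun hji => hX.not_mem i j hji p hj hpi, hj⟩

theorem degOn_iteratedResidual_Ioi_add_card_le (hX : IsKConfig X d Xs Ls) (hD : ∀ i, d i ≤ D)
    (hμ : ⇑μ ≤ X.indicator fun _ => n + 1) (i : Fin s) :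
    (Ls i).degOn (iteratedResidual Ls (Finset.Ioi i) μ) + #(Finset.Ioi i) ≤
      n * (X ∩ (Ls i).points).ncard + D := by
  have hdeg : (Ls i).degOn (iteratedResidual Ls (Finset.Ioi i) μ) ≤
      n * (X ∩ (Ls i).points).ncard + 1 * (Xs i).ncard := by
    rw [ProjLine.degOn_eq_sum_of_support_subset
      (support_iteratedResidual_subset.trans (support_subset_toFinset hX.finite hμ)),
      ← sum_toFinset_indicator hX.finite Set.inter_subset_left,
      ← sum_toFinset_indicator hX.finite (hX.subset i), ← Finset.sum_add_distrib]
    refine Finset.sum_le_sum fun p hp => ?_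
    rw [hX.finite.mem_toFinset] at hp
    by_cases hpi : p ∈ (Ls i).points
    swap
    · rw [Set.indicator_of_notMem hpi]
      exact Nat.zero_le _
    have hμp := hμ p
    rw [Set.indicator_of_mem hp] at hμp
    rw [Set.indicator_of_mem hpi, Set.indicator_of_mem (Set.mem_inter hp hpi)]
    obtain ⟨j, hij, hj⟩ := hX.exists_ge_mem hp hpi
    obtain rfl | hij := hij.eq_or_lt
    · rw [Set.indicator_of_mem hj]
      exact iteratedResidual_apply_le.trans hμp
    · exact (iteratedResidual_apply_le_sub_one (Finset.mem_Ioi.2 hij) (hX.subset_line j hj)).trans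
        ((Nat.sub_le_of_le_add hμp).trans (Nat.le_add_right _ _))
  have := hX.add_card_Ioi_le hD i
  rw [hX.card_eq] at hdeg
  omega

theorem ncard_inter_points_le (hX : IsKConfig X d Xs Ls) (hD : ∀ i, d i ≤ D) (i : Fin s) :
    (X ∩ (Ls i).points).ncard ≤ D := by
  obtain ⟨μ, hμ⟩ := exists_coe_eq_indicator hX.finite 1
  have hres := hX.degOn_iteratedResidual_Ioi_add_card_le (n := 0) hD hμ.le i
  have hle := ProjLine.degOn_le_degOn_iteratedResidual_add_card (μ := μ) (Ls := Ls)
    (J := Finset.Ioi i) fun j hj => hX.lines_distinct.ne (Finset.mem_Ioi.1 hj).ne'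
  rw [ProjLine.degOn_eq_mul_ncard hX.finite hμ] at hle
  omega

theorem iteratedResidual_univ_le (hX : IsKConfig X d Xs Ls)
    (hμ : ⇑μ ≤ X.indicator fun _ => n + 1) :
    ⇑(iteratedResidual Ls Finset.univ μ) ≤ X.indicator fun _ => n := fun p => by
  by_cases hp : p ∈ X
  · have hμp := hμ p
    rw [Set.indicator_of_mem hp] at hμp ⊢
    rw [hX.union_eq, Set.mem_iUnion] at hp
    obtain ⟨j, hj⟩ := hp
    exact (iteratedResidual_apply_le_sub_one (Finset.mem_univ j) (hX.subset_line j hj)).trans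
      (Nat.sub_le_of_le_add hμp)
  · refine iteratedResidual_apply_le.trans ((hμ p).trans ?_)
    rw [Set.indicator_of_notMem hp, Set.indicator_of_notMem hp]

theorem exists_eq_of_lt_ncard (hX : IsKConfig X d Xs Ls) (hL : s < (X ∩ L.points).ncard) :
    ∃ i, Ls i = L := by
  by_contra! hne
  obtain ⟨μ, hμ⟩ := exists_coe_eq_indicator hX.finite 1
  have hle := ProjLine.degOn_le_degOn_iteratedResidual_add_card (μ := μ) (Ls := Ls)
    (J := Finset.univ) fun i _ => hne i
  have hres : ⇑(iteratedResidual Ls Finset.univ μ) = X.indicator fun _ => 0 :=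
    (hX.iteratedResidual_univ_le hμ.le).antisymm
      (Set.indicator_le fun _ _ => Nat.zero_le _)
  rw [ProjLine.degOn_eq_mul_ncard hX.finite hμ, ProjLine.degOn_eq_mul_ncard hX.finite hres,
    Finset.card_univ, Fintype.card_fin] at hle
  omega

theorem excess_univ_le (hX : IsKConfig X d Xs Ls) (hD : ∀ i, d i ≤ D)
    (hμ : ⇑μ ≤ X.indicator fun _ => n + 1) (i : Fin s) :
    excess Ls Finset.univ μ t i ≤ n * (X ∩ (Ls i).points).ncard + D - (t + 1) := by
  have := hX.degOn_iteratedResidual_Ioi_add_card_le hD hμ i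
  rw [excess, Finset.filter_lt_eq_Ioi]
  omega

theorem superabundance_eq_zero (hX : IsKConfig X d Xs Ls) (hD : ∀ i, d i ≤ D) (hs : s < D)
    (hμ : ⇑μ ≤ X.indicator fun _ => m) (ht : m * D ≤ t + 1) : superabundance μ t = 0 := by
  refine le_antisymm ?_ (superabundance_nonneg μ t)
  induction m generalizing μ t with
  | zero =>
    obtain rfl : μ = 0 := Finsupp.ext fun p => by simpa using hμ p
    exact (superabundance_zero t).le
  | succ n ih =>
    rw [Nat.succ_mul] at ht
    obtain ⟨t', ht'⟩ := Nat.exists_eq_add_of_le' (show s ≤ t by omega)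
    have hres := ih (hX.iteratedResidual_univ_le hμ) (t := t') (by omega)
    have hexc (i : Fin s) : max 0 (excess Ls Finset.univ μ t i) = 0 := by
      have hN := Nat.mul_le_mul_left n (hX.ncard_inter_points_le hD i)
      have := hX.excess_univ_le (t := t) hD hμ i
      omega
    have := superabundance_le_superabundance_iteratedResidual_add_sum_excess (μ := μ) (Ls := Ls)
      (J := Finset.univ) (t := t') (T := t) (by simp [ht'])
    rw [Finset.sum_eq_zero fun i _ => hexc i] at this
    omega

theorem superabundance_le (hX : IsKConfig X d Xs Ls) (hD : ∀ i, d i ≤ D) (hs : s < D)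
    (hm : 2 ≤ m) (hμ : ⇑μ ≤ X.indicator fun _ => m) (ht : m * D = t + 2) :
    superabundance μ t ≤ #{i | (X ∩ (Ls i).points).ncard = D} := by
  obtain ⟨n, rfl⟩ := Nat.exists_eq_add_of_le' (one_le_two.trans hm)
  rw [add_one_mul] at ht
  have hn : D ≤ n * D := Nat.le_mul_of_pos_left D (by omega)
  obtain ⟨t', ht'⟩ := Nat.exists_eq_add_of_le' (show s ≤ t by omega)
  have hres := hX.superabundance_eq_zero hD hs (hX.iteratedResidual_univ_le hμ) (t := t') (by omega)
  have hexc (i : Fin s) : max 0 (excess Ls Finset.univ μ t i) ≤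
      if (X ∩ (Ls i).points).ncard = D then 1 else 0 := by
    have hi := hX.excess_univ_le (t := t) hD hμ i
    split_ifs with hN
    · rw [hN] at hi
      omega
    · have hlt := Nat.mul_le_mul_left n
        (Nat.le_sub_one_of_lt ((hX.ncard_inter_points_le hD i).lt_of_ne hN))
      rw [Nat.mul_sub_one] at hlt
      omega
  calc superabundance μ t
      ≤ superabundance (iteratedResidual Ls Finset.univ μ) t' +
          ∑ i, max 0 (excess Ls Finset.univ μ t i) :=
        superabundance_le_superabundance_iteratedResidual_add_sum_excess (by simp [ht'])
    _ ≤ 0 + ∑ i, if (X ∩ (Ls i).points).ncard = D then 1 else 0 :=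
        add_le_add hres.le (Finset.sum_le_sum fun i _ => hexc i)
    _ = _ := by rw [zero_add, Finset.sum_boole]

theorem le_superabundance (hX : IsKConfig X d Xs Ls) (hs : s ≤ t)
    (hμ : ⇑μ = X.indicator fun _ => m) (ht : m * D = t + 2) :
    #{i | (X ∩ (Ls i).points).ncard = D} ≤ superabundance μ t := by
  set J : Finset (Fin s) := {i | (X ∩ (Ls i).points).ncard = D}
  have hJ : #J ≤ t := (J.card_le_univ.trans_eq (Fintype.card_fin s)).trans hs
  have hexc : ∀ i ∈ J, 1 ≤ excess Ls J μ t i := fun i hi => by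
    have hle := ProjLine.degOn_le_degOn_iteratedResidual_add_card (μ := μ) (Ls := Ls)
      (J := {j ∈ J | i < j}) (L := Ls i)
      fun j hj => hX.lines_distinct.ne (Finset.mem_filter.1 hj).2.ne'
    rw [ProjLine.degOn_eq_mul_ncard hX.finite hμ, (Finset.mem_filter.1 hi).2] at hle
    rw [excess]
    omega
  have hsum := superabundance_iteratedResidual_add_sum_excess_le (μ := μ) (Ls := Ls)
    (Nat.sub_add_cancel hJ)
  have hcard := Finset.card_nsmul_le_sum J (fun i => excess Ls J μ t i) 1 hexc
  have hres := superabundance_nonneg (iteratedResidual Ls J μ) (t - #J)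
  rw [nsmul_one] at hcard
  omega

theorem ncard_setOf_ncard_inter_points_eq (hX : IsKConfig X d Xs Ls) (hs : s < D) :
    {L : ProjLine K | (X ∩ L.points).ncard = D}.ncard =
      #{i | (X ∩ (Ls i).points).ncard = D} := by
  classical
  rw [← Finset.card_image_of_injective _ hX.lines_distinct, ← Set.ncard_coe_finset]
  congr 1
  ext L
  simp only [Set.mem_ofPred_eq, Finset.coe_image, Finset.coe_filter, Finset.mem_univ, true_and,
    Set.mem_image]
  refine ⟨fun hL => ?_, ?_⟩
  · obtain ⟨i, rfl⟩ := hX.exists_eq_of_lt_ncard (hL ▸ hs)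
    exact ⟨i, hL, rfl⟩
  · rintro ⟨i, hi, rfl⟩
    exact hi

end IsKConfig

theorem hilb_fatIdeal (hμ : ⇑μ = X.indicator fun _ => m) (t : ℕ) :
    (hilb (fatIdeal X m) t : ℤ) = schemeLength μ - superabundance μ t := by
  have hforms : fatForms μ t = (fatIdeal X m).restrictScalars K ⊓
      homogeneousSubmodule (Fin 3) K t := by
    ext f
    rw [mem_fatForms, hμ, and_comm]
    refine and_congr_left fun _ => ?_
    change _ ↔ f ∈ fatIdeal X m
    simp only [fatIdeal, Submodule.mem_iInf]
    refine forall_congr' fun p => ?_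
    by_cases hp : p ∈ X <;> simp [hp]
  have hle := Submodule.finrank_mono (fatForms_le_homogeneousSubmodule (μ := μ) (t := t))
  rw [superabundance, hilb, ← hforms]
  omega

end KConfig

theorem kconfig_big_mult_general {K : Type} [Field K] {s : ℕ} (hs : 0 < s)
    (X : Set (P2 K)) (d : Fin s → ℕ) (Xs : Fin s → Set (P2 K)) (Ls : Fin s → ProjLine K)
    (hX : IsKConfig X d Xs Ls)
    (ds : ℕ) (hds : ds = d ⟨s - 1, Nat.sub_lt hs Nat.one_pos⟩) (hgt : s < ds)
    (m : ℕ) (hm : 2 ≤ m) :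
    deltaHilb (fatIdeal X m) ((m : ℤ) * ds - 1) =
      {L : ProjLine K | (X ∩ L.points).ncard = ds}.ncard := by
  have hD (i : Fin s) : d i ≤ ds := hds ▸ hX.strictMono.monotone (Nat.le_sub_one_of_lt i.2)
  obtain ⟨μ, hμ⟩ := exists_coe_eq_indicator hX.finite m
  obtain ⟨t, ht⟩ := Nat.exists_eq_add_of_le' (show 2 ≤ m * ds by nlinarith)
  have hst : s ≤ t := by nlinarith
  have htop : superabundance μ (t + 1) = 0 := hX.superabundance_eq_zero hD hgt hμ.le ht.le
  have hbot : superabundance μ t = {L : ProjLine K | (X ∩ L.points).ncard = ds}.ncard := by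
    rw [hX.ncard_setOf_ncard_inter_points_eq hgt]
    exact (hX.superabundance_le hD hgt hm hμ.le ht).antisymm (hX.le_superabundance hst hμ ht)
  have ht₁ : (m : ℤ) * ds - 1 = (t + 1 : ℕ) := by omega
  have ht₀ : ((t + 1 : ℕ) : ℤ) - 1 = t := by omega
  rw [deltaHilb, ht₁, ht₀, hilbZ, hilbZ, if_neg (by omega), if_neg (by omega), Int.toNat_natCast,
    Int.toNat_natCast, hilb_fatIdeal hμ, hilb_fatIdeal hμ, htop, hbot]
  ring

/-- **Theorem (the case `d_s > s`).** Let `X` be a k-configuration of type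
`(d₁,…,d_s)` with `d_s > s`, and suppose exactly `r` lines contain exactly
`d_s` points of `X`. Then `ΔH_{mX}(m·d_s − 1) = r` for all `m ≥ 2`. -/
theorem kconfig_big_mult {K : Type} [Field K] [IsAlgClosed K] {s : ℕ} (hs : 0 < s)
    (X : Set (P2 K)) (d : Fin s → ℕ) (Xs : Fin s → Set (P2 K)) (Ls : Fin s → ProjLine K)
    (hX : IsKConfig X d Xs Ls)
    (ds : ℕ) (hds : ds = d ⟨s - 1, Nat.sub_lt hs Nat.one_pos⟩)
    (hgt : s < ds) (r : ℕ)
    (hfin : {L : ProjLine K | (X ∩ L.points).ncard = ds}.Finite)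
    (hr : {L : ProjLine K | (X ∩ L.points).ncard = ds}.ncard = r) :
    ∀ m : ℕ, 2 ≤ m → deltaHilb (fatIdeal X m) ((m : ℤ) * ds - 1) = r :=
  fun m hm => hr ▸ kconfig_big_mult_general hs X d Xs Ls hX ds hds hgt m hm
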